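/- arXiv:1111.5983 — 5 statements merged into one kernel-verified Lean document; each statement's English description precedes it below -/
import Mathlib

section
/- Let O be a discrete valuation ring with fraction field K, let L₁ and L₂ be finite free O-modules of nonzero rank, and set W₁ = K ⊗_O L₁ and W₂ = K ⊗_O L₂. Let Λ ⊆ W₁ ⊗_K W₂ denote the image of the canonical map L₁ ⊗_O L₂ → W₁ ⊗_K W₂, and identify L₁ and L₂ with their images in W₁ and W₂. Suppose g is a K-linear automorphism of W₁ and h is a K-linear automorphism of W₂ with det(h) = 1, and suppose the automorphism g ⊗ h of W₁ ⊗_K W₂ maps Λ onto Λ. Then g maps L₁ onto L₁ and h maps L₂ onto L₂. Consequently, for any group P and any homomorphism ρ = (ρ₁, ρ₂) : P → GL(W₁) × SL(W₂) such that the induced tensor-product action of P on W₁ ⊗_K W₂ preserves Λ, the lattice L₁ is stable under ρ₁(P) and the lattice L₂ is stable under ρ₂(P). -/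
open scoped TensorProduct

/-!
In bases of the two lattices the matrix of `g ⊗ h` is the Kronecker product of those of `g` and
`h`, so every entry `a` of `g` makes the matrix `a • h` integral. Its determinant is `aⁿ` up to a
unit, and integral closedness gives `a ∈ O`. The same argument applies to `g⁻¹`, so `g` preserves
`L₁`. The coordinates of `h y` are then among those of `bᵢ ⊗ h y = (g ⊗ h) (g⁻¹ bᵢ ⊗ y)`.
-/

open Module Submodule

section TensorLattice

variable {O K : Type*} [CommRing O] [CommRing K] [Algebra O K]

theorem mem_range_algebraMap_of_forall_mul_matrix_mem [IsIntegrallyClosedIn O K]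
    {n : Type*} [Fintype n] [DecidableEq n] [Nonempty n] {a : K} {B : Matrix n n K} {u : Oˣ}
    (hdet : algebraMap O K u = B.det)
    (hB : ∀ i j, a * B i j ∈ Set.range (algebraMap O K)) :
    a ∈ Set.range (algebraMap O K) := by
  choose M hM using hB
  have hpow : algebraMap O K ((Matrix.of M).det * ↑u⁻¹) = a ^ Fintype.card n := calc
    _ = (a • B).det * algebraMap O K ↑u⁻¹ := by
      rw [map_mul, RingHom.map_det]
      congr 2
      ext i j
      exact hM i j
    _ = a ^ Fintype.card n * algebraMap O K (u * ↑u⁻¹) := by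
      rw [Matrix.det_smul, ← hdet, mul_assoc, map_mul]
    _ = a ^ Fintype.card n := by rw [Units.mul_inv, map_one, mul_one]
  exact IsIntegrallyClosedIn.exists_algebraMap_eq_of_isIntegral_pow Fintype.card_pos
    (hpow ▸ isIntegral_algebraMap)

theorem map_restrictScalars_eq_self_iff {W : Type*} [AddCommGroup W] [Module K W] [Module O W]
    [IsScalarTower O K W] (e : W ≃ₗ[K] W) (L : Submodule O W) :
    L.map (e.toLinearMap.restrictScalars O) = L ↔ ∀ x, e x ∈ L ↔ x ∈ L := by
  rw [SetLike.ext_iff, e.surjective.forall]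
  simp only [mem_map, LinearMap.restrictScalars_apply, LinearEquiv.coe_coe,
    e.injective.eq_iff, exists_eq_right, iff_comm]

theorem exists_basis_eq_span_range [IsDomain O] [IsPrincipalIdealRing O]
    (F : Type*) [Field F] [Algebra O F] [IsFractionRing O F]
    {W : Type*} [AddCommGroup W] [Module F W] [Module O W] [IsScalarTower O F W]
    (L : Submodule O W) [IsLattice F L] :
    ∃ (n : ℕ) (b : Basis (Fin n) F W), L = span O (Set.range b) := by
  have : Module.Free O L := IsLattice.free F L
  let b := Module.finBasis O L
  refine ⟨_, b.extendOfIsLattice F, ?_⟩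
  have hrange : Set.range (b.extendOfIsLattice F) = L.subtype '' Set.range b := by
    rw [← Set.range_comp]
    exact congrArg Set.range (funext (b.extendOfIsLattice_apply F))
  rw [hrange, span_image, b.span_eq, map_subtype_top]

variable {W₁ W₂ : Type*} [AddCommGroup W₁] [Module K W₁] [AddCommGroup W₂] [Module K W₂]
  [Module O W₁] [IsScalarTower O K W₁] [Module O W₂] [IsScalarTower O K W₂]

variable (K) in
/-- The lattice in `W₁ ⊗[K] W₂` given by the image of `L₁ ⊗[O] L₂`, encoded as the image of the
pair `(L₁, L₂)` under the bilinear map `(x, y) ↦ x ⊗ₜ[K] y`. -/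
def tensorLattice (L₁ : Submodule O W₁) (L₂ : Submodule O W₂) : Submodule O (W₁ ⊗[K] W₂) :=
  map₂ ((TensorProduct.mk K W₁ W₂).restrictScalars₁₂ O O) L₁ L₂

theorem tensorLattice_eq_span (L₁ : Submodule O W₁) (L₂ : Submodule O W₂) :
    tensorLattice K L₁ L₂ =
      span O {z : W₁ ⊗[K] W₂ | ∃ x ∈ L₁, ∃ y ∈ L₂, z = x ⊗ₜ[K] y} := by
  simp only [tensorLattice, map₂_eq_span_image2, Set.image2, SetLike.mem_coe, eq_comm]
  rfl

theorem tmul_mem_tensorLattice {L₁ : Submodule O W₁} {L₂ : Submodule O W₂} {x : W₁} {y : W₂}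
    (hx : x ∈ L₁) (hy : y ∈ L₂) : x ⊗ₜ[K] y ∈ tensorLattice K L₁ L₂ :=
  apply_mem_map₂ _ hx hy

variable {ι₁ ι₂ : Type*} (b₁ : Basis ι₁ K W₁) (b₂ : Basis ι₂ K W₂)

theorem tensorLattice_span_range :
    tensorLattice K (span O (Set.range b₁)) (span O (Set.range b₂)) =
      span O (Set.range (b₁.tensorProduct b₂)) := by
  rw [tensorLattice, map₂_span_span, Set.image2_range]
  exact congrArg (fun f ↦ span O (Set.range f)) (funext fun p ↦ (b₁.tensorProduct_apply' b₂ p).symm)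

variable [IsDomain O] [Nontrivial K] [IsTorsionFree O K]

theorem tmul_mem_tensorLattice_span_range_iff (x : W₁) (y : W₂) :
    x ⊗ₜ[K] y ∈ tensorLattice K (span O (Set.range b₁)) (span O (Set.range b₂)) ↔
      ∀ i j, b₁.repr x i * b₂.repr y j ∈ Set.range (algebraMap O K) := by
  simp only [tensorLattice_span_range, Basis.mem_span_iff_repr_mem, Prod.forall,
    Basis.tensorProduct_repr_tmul_apply, smul_eq_mul, mul_comm]

theorem mem_span_range_of_basis_tmul_mem_tensorLattice {i : ι₁} {y : W₂}
    (hy : b₁ i ⊗ₜ[K] y ∈ tensorLattice K (span O (Set.range b₁)) (span O (Set.range b₂))) :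
    y ∈ span O (Set.range b₂) := by
  rw [Basis.mem_span_iff_repr_mem]
  intro j
  simpa only [Basis.repr_self, Finsupp.single_eq_same, one_mul] using
    (tmul_mem_tensorLattice_span_range_iff b₁ b₂ _ _).1 hy i j

variable {L₁ : Submodule O W₁} {L₂ : Submodule O W₂} {g : W₁ ≃ₗ[K] W₁} {h : W₂ ≃ₗ[K] W₂}

theorem apply_mem_right_iff_of_congr_mem_tensorLattice_iff [Nonempty ι₁]
    (hL₁ : L₁ = span O (Set.range b₁)) (hL₂ : L₂ = span O (Set.range b₂))
    (hg : ∀ x, g x ∈ L₁ ↔ x ∈ L₁)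
    (hgh : ∀ z, TensorProduct.congr g h z ∈ tensorLattice K L₁ L₂ ↔ z ∈ tensorLattice K L₁ L₂)
    (y : W₂) : h y ∈ L₂ ↔ y ∈ L₂ := by
  subst hL₁ hL₂
  obtain ⟨i⟩ := ‹Nonempty ι₁›
  have hb : b₁ i ∈ span O (Set.range b₁) := subset_span ⟨i, rfl⟩
  refine ⟨fun hy ↦ ?_, fun hy ↦ ?_⟩
  · exact mem_span_range_of_basis_tmul_mem_tensorLattice b₁ b₂
      ((hgh (b₁ i ⊗ₜ y)).1 (tmul_mem_tensorLattice ((hg _).2 hb) hy))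
  · have hgb : g.symm (b₁ i) ∈ span O (Set.range b₁) :=
      (hg _).1 (by rwa [g.apply_symm_apply])
    have hgy := (hgh _).2 (tmul_mem_tensorLattice hgb hy)
    rw [TensorProduct.congr_tmul, g.apply_symm_apply] at hgy
    exact mem_span_range_of_basis_tmul_mem_tensorLattice b₁ b₂ hgy

variable [IsIntegrallyClosedIn O K]

theorem mem_span_range_of_forall_tmul_mem_tensorLattice [Finite ι₂] [Nonempty ι₂]
    (hdet : LinearEquiv.det h ∈ (Units.map (algebraMap O K : O →* K)).range)
    {x : W₁} (hx : ∀ j, x ⊗ₜ[K] h (b₂ j) ∈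
      tensorLattice K (span O (Set.range b₁)) (span O (Set.range b₂))) :
    x ∈ span O (Set.range b₁) := by
  classical
  cases nonempty_fintype ι₂
  obtain ⟨u, hu⟩ := hdet
  have hdet_matrix : algebraMap O K u = (LinearMap.toMatrix b₂ b₂ h.toLinearMap).det := by
    rw [LinearMap.det_toMatrix, ← LinearEquiv.coe_det, ← hu]
    rfl
  rw [Basis.mem_span_iff_repr_mem]
  refine fun i ↦ mem_range_algebraMap_of_forall_mul_matrix_mem hdet_matrix fun k l ↦ ?_
  rw [LinearMap.toMatrix_apply]
  exact (tmul_mem_tensorLattice_span_range_iff b₁ b₂ _ _).1 (hx l) i k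

theorem apply_mem_left_of_congr_mem_tensorLattice [Finite ι₂] [Nonempty ι₂]
    (hL₁ : L₁ = span O (Set.range b₁)) (hL₂ : L₂ = span O (Set.range b₂))
    (hdet : LinearEquiv.det h ∈ (Units.map (algebraMap O K : O →* K)).range)
    (hgh : ∀ z ∈ tensorLattice K L₁ L₂, TensorProduct.congr g h z ∈ tensorLattice K L₁ L₂)
    {x : W₁} (hx : x ∈ L₁) : g x ∈ L₁ := by
  subst hL₁ hL₂
  exact mem_span_range_of_forall_tmul_mem_tensorLattice b₁ b₂ hdet fun j ↦
    hgh _ (tmul_mem_tensorLattice hx (subset_span ⟨j, rfl⟩))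

theorem apply_mem_left_iff_of_congr_mem_tensorLattice_iff [Finite ι₂] [Nonempty ι₂]
    (hL₁ : L₁ = span O (Set.range b₁)) (hL₂ : L₂ = span O (Set.range b₂))
    (hdet : LinearEquiv.det h ∈ (Units.map (algebraMap O K : O →* K)).range)
    (hgh : ∀ z, TensorProduct.congr g h z ∈ tensorLattice K L₁ L₂ ↔ z ∈ tensorLattice K L₁ L₂)
    (x : W₁) : g x ∈ L₁ ↔ x ∈ L₁ := by
  have hdet_symm : LinearEquiv.det h.symm ∈ (Units.map (algebraMap O K : O →* K)).range := by
    rw [LinearEquiv.det_symm, map_inv]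
    exact inv_mem hdet
  have hgh_symm : ∀ z ∈ tensorLattice K L₁ L₂,
      TensorProduct.congr g.symm h.symm z ∈ tensorLattice K L₁ L₂ := fun z hz ↦
    (hgh _).1 (by rwa [← TensorProduct.congr_symm, LinearEquiv.apply_symm_apply])
  refine ⟨fun hx ↦ ?_, fun hx ↦
    apply_mem_left_of_congr_mem_tensorLattice b₁ b₂ hL₁ hL₂ hdet (fun z ↦ (hgh z).2) hx⟩
  simpa only [g.symm_apply_apply] using
    apply_mem_left_of_congr_mem_tensorLattice b₁ b₂ hL₁ hL₂ hdet_symm hgh_symm hx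

theorem map_eq_self_of_map_congr_tensorLattice_eq_self [Nonempty ι₁] [Finite ι₂] [Nonempty ι₂]
    (hL₁ : L₁ = span O (Set.range b₁)) (hL₂ : L₂ = span O (Set.range b₂))
    (hdet : LinearEquiv.det h ∈ (Units.map (algebraMap O K : O →* K)).range)
    (hgh : (tensorLattice K L₁ L₂).map ((TensorProduct.congr g h).toLinearMap.restrictScalars O) =
      tensorLattice K L₁ L₂) :
    L₁.map (g.toLinearMap.restrictScalars O) = L₁ ∧
      L₂.map (h.toLinearMap.restrictScalars O) = L₂ := by
  simp only [map_restrictScalars_eq_self_iff] at hgh ⊢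
  have hg := apply_mem_left_iff_of_congr_mem_tensorLattice_iff b₁ b₂ hL₁ hL₂ hdet hgh
  exact ⟨hg, apply_mem_right_iff_of_congr_mem_tensorLattice_iff b₁ b₂ hL₁ hL₂ hg hgh⟩

end TensorLattice

theorem stmt0_general
    (O : Type*) [CommRing O] [IsDomain O]
    (K : Type*) [CommRing K] [Algebra O K] [IsTorsionFree O K]
    [IsIntegrallyClosedIn O K]
    (W₁ W₂ : Type*) [AddCommGroup W₁] [Module K W₁] [AddCommGroup W₂] [Module K W₂]
    [Module O W₁] [IsScalarTower O K W₁] [Module O W₂] [IsScalarTower O K W₂]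
    [Nontrivial W₁] [Nontrivial W₂] {ι₁ ι₂ : Type*} [Finite ι₂]
    (b₁ : Basis ι₁ K W₁) (b₂ : Basis ι₂ K W₂)
    (L₁ : Submodule O W₁) (L₂ : Submodule O W₂)
    (hL₁ : L₁ = span O (Set.range b₁)) (hL₂ : L₂ = span O (Set.range b₂))
    (Λ : Submodule O (W₁ ⊗[K] W₂))
    (hΛ : Λ = span O {z : W₁ ⊗[K] W₂ | ∃ x ∈ L₁, ∃ y ∈ L₂, z = x ⊗ₜ[K] y}) :
    (∀ (g : W₁ ≃ₗ[K] W₁) (h : W₂ ≃ₗ[K] W₂),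
        LinearEquiv.det h ∈ (Units.map (algebraMap O K : O →* K)).range →
        Λ.map ((TensorProduct.congr g h).toLinearMap.restrictScalars O) = Λ →
        L₁.map (g.toLinearMap.restrictScalars O) = L₁ ∧
        L₂.map (h.toLinearMap.restrictScalars O) = L₂) ∧
    (∀ (P : Type*) [Group P] (ρ₁ : P →* (W₁ ≃ₗ[K] W₁)) (ρ₂ : P →* (W₂ ≃ₗ[K] W₂)),
        (∀ x, LinearEquiv.det (ρ₂ x) ∈ (Units.map (algebraMap O K : O →* K)).range) →
        (∀ x, Λ.map ((TensorProduct.congr (ρ₁ x) (ρ₂ x)).toLinearMap.restrictScalars O) = Λ) →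
        ∀ x, L₁.map ((ρ₁ x).toLinearMap.restrictScalars O) = L₁ ∧
          L₂.map ((ρ₂ x).toLinearMap.restrictScalars O) = L₂) := by
  rw [← tensorLattice_eq_span] at hΛ
  subst hΛ
  have := Module.nontrivial K W₁
  have := b₁.index_nonempty
  have := b₂.index_nonempty
  have stable {g : W₁ ≃ₗ[K] W₁} {h : W₂ ≃ₗ[K] W₂} :=
    map_eq_self_of_map_congr_tensorLattice_eq_self b₁ b₂ hL₁ hL₂ (g := g) (h := h)
  exact ⟨fun _ _ ↦ stable, fun _ _ _ _ hdet hmap x ↦ stable (hdet x) (hmap x)⟩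

/-- Lemma on lattice decomposition: let `O` be a DVR with fraction field `K`, and let
`L₁ ⊆ W₁`, `L₂ ⊆ W₂` be finitely generated `O`-lattices (spanning the nonzero `K`-vector
spaces `W₁`, `W₂`), and let `Λ ⊆ W₁ ⊗_K W₂` be the `O`-span of the pure tensors of lattice
vectors (the image of `L₁ ⊗_O L₂`).  If `g ∈ GL(W₁)` and `h ∈ GL(W₂)` with `det h = 1`
are such that `g ⊗ h` maps `Λ` onto `Λ`, then `g` maps `L₁` onto `L₁` and `h` maps `L₂`
onto `L₂`.  Consequently, for any group `P` and homomorphism `(ρ₁, ρ₂) : P → GL(W₁) × SL(W₂)`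
whose tensor-product action preserves `Λ`, the lattices `L₁` and `L₂` are stable. -/
theorem stmt0
    (O : Type*) [CommRing O] [IsDomain O] [IsDiscreteValuationRing O]
    (K : Type*) [Field K] [Algebra O K] [IsFractionRing O K]
    (W₁ W₂ : Type*) [AddCommGroup W₁] [Module K W₁] [AddCommGroup W₂] [Module K W₂]
    [Module O W₁] [IsScalarTower O K W₁] [Module O W₂] [IsScalarTower O K W₂]
    [Nontrivial W₁] [Nontrivial W₂]
    (L₁ : Submodule O W₁) (L₂ : Submodule O W₂)
    (hL₁fg : L₁.FG) (hL₂fg : L₂.FG)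
    (hL₁span : Submodule.span K (L₁ : Set W₁) = ⊤)
    (hL₂span : Submodule.span K (L₂ : Set W₂) = ⊤)
    (Λ : Submodule O (W₁ ⊗[K] W₂))
    (hΛ : Λ = Submodule.span O {z : W₁ ⊗[K] W₂ | ∃ x ∈ L₁, ∃ y ∈ L₂, z = x ⊗ₜ[K] y}) :
    (∀ (g : W₁ ≃ₗ[K] W₁) (h : W₂ ≃ₗ[K] W₂),
        LinearMap.det h.toLinearMap = 1 →
        Submodule.map (((TensorProduct.congr g h).toLinearMap).restrictScalars O) Λ = Λ →
        Submodule.map (g.toLinearMap.restrictScalars O) L₁ = L₁ ∧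
        Submodule.map (h.toLinearMap.restrictScalars O) L₂ = L₂) ∧
    (∀ (P : Type*) [Group P],
      ∀ (ρ₁ : P →* (W₁ ≃ₗ[K] W₁)) (ρ₂ : P →* (W₂ ≃ₗ[K] W₂)),
        (∀ x : P, LinearMap.det (ρ₂ x).toLinearMap = 1) →
        (∀ x : P, Submodule.map
            (((TensorProduct.congr (ρ₁ x) (ρ₂ x)).toLinearMap).restrictScalars O) Λ = Λ) →
        ∀ x : P,
          Submodule.map ((ρ₁ x).toLinearMap.restrictScalars O) L₁ = L₁ ∧
          Submodule.map ((ρ₂ x).toLinearMap.restrictScalars O) L₂ = L₂) := by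
  have : IsIntegrallyClosedIn O K := (isIntegrallyClosed_iff_isIntegrallyClosedIn K).1 inferInstance
  have : IsLattice K L₁ := ⟨hL₁fg, hL₁span⟩
  have : IsLattice K L₂ := ⟨hL₂fg, hL₂span⟩
  obtain ⟨n₁, b₁, hb₁⟩ := exists_basis_eq_span_range K L₁
  obtain ⟨n₂, b₂, hb₂⟩ := exists_basis_eq_span_range K L₂
  have hunit (h : W₂ ≃ₗ[K] W₂) (hdet : LinearMap.det h.toLinearMap = 1) :
      LinearEquiv.det h ∈ (Units.map (algebraMap O K : O →* K)).range :=
    ⟨1, Units.ext <| by rw [map_one, LinearEquiv.coe_det, hdet, Units.val_one]⟩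
  obtain ⟨single, family⟩ := stmt0_general O K W₁ W₂ b₁ b₂ L₁ L₂ hb₁ hb₂ Λ hΛ
  exact ⟨fun g h hdet ↦ single g h (hunit h hdet),
    fun P _ ρ₁ ρ₂ hdet ↦ family P ρ₁ ρ₂ fun x ↦ hunit _ (hdet x)⟩
end

section
/- Let K be a field, V a nonzero K-vector space, and r ≥ 1 an integer. If g is a K-linear automorphism of V such that the induced automorphism g^{⊗r} of the r-fold tensor power V^{⊗r} (sending v₁ ⊗ ⋯ ⊗ v_r to g(v₁) ⊗ ⋯ ⊗ g(v_r)) is the identity, then there exists λ ∈ K with λ^r = 1 and g = λ·id_V. -/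
open scoped TensorProduct

/-!
Let `φ` be a functional and `x` a vector with `φ x = 1`, and put `a = φ (g x)`. Evaluating
`g^⊗r = id` at `x ⊗ ⋯ ⊗ x` and contracting every factor with `φ` gives `a ^ r = 1`. Replacing one
factor `x` by an arbitrary `v` and contracting only the other factors gives
`a ^ (r - 1) • g v = v`. Multiplying by `a` yields `g v = a • v`.
-/

section

open Module PiTensorProduct

variable {ι R : Type*} [CommSemiring R]

section Family

variable {M : ι → Type*} [∀ j, AddCommMonoid (M j)] [∀ j, Module R (M j)]

/-- The contraction `⨂ j, M j → M i` of a tensor product against the functionals `φ j` in all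
factors except the `i`-th, used to recover `f i` from `map f`. The family `φ` is indexed by all of
`ι` to avoid subtypes; its value at `i` is ignored. -/
noncomputable def contractExcept [Finite ι] [DecidableEq ι] (φ : ∀ j, Dual R (M j)) (i : ι) :
    (⨂[R] j, M j) →ₗ[R] M i :=
  TensorProduct.lid R (M i) ∘ₗ
    (dualDistrib (⨂ₜ[R] j : ({i}ᶜ : Set ι), φ j)).rTensor (M i) ∘ₗ
    equivPiTensorComplSingletonTensor R M i

theorem contractExcept_tprod [Fintype ι] [DecidableEq ι] (φ : ∀ j, Dual R (M j)) (i : ι)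
    (m : ∀ j, M j) :
    contractExcept φ i (⨂ₜ[R] j, m j) = (∏ j ∈ {i}ᶜ, φ j (m j)) • m i := by
  have hprod : ∏ j : ({i}ᶜ : Set ι), φ j (m j) = ∏ j ∈ {i}ᶜ, φ j (m j) :=
    (Finset.prod_subtype {i}ᶜ (by simp) fun j => φ j (m j)).symm
  rw [← hprod, ← dualDistrib_apply]
  simp only [contractExcept, LinearMap.comp_apply, LinearEquiv.coe_coe,
    equivPiTensorComplSingletonTensor_tprod]
  exact TensorProduct.lid_tmul _ _

theorem prod_apply_eq_of_piTensorProduct_map_eq_id [Fintype ι] {f : ∀ j, M j →ₗ[R] M j}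
    (hf : map f = LinearMap.id) (φ : ∀ j, Dual R (M j)) (x : ∀ j, M j) :
    ∏ j, φ j (f j (x j)) = ∏ j, φ j (x j) := by
  simpa using congrArg (dualDistrib (⨂ₜ[R] j, φ j)) (LinearMap.congr_fun hf (⨂ₜ[R] j, x j))

theorem prod_compl_smul_apply_eq_of_piTensorProduct_map_eq_id [Fintype ι] [DecidableEq ι]
    {f : ∀ j, M j →ₗ[R] M j} (hf : map f = LinearMap.id) (φ : ∀ j, Dual R (M j)) (x : ∀ j, M j)
    (i : ι) (v : M i) :
    (∏ j ∈ {i}ᶜ, φ j (f j (x j))) • f i v = (∏ j ∈ {i}ᶜ, φ j (x j)) • v := by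
  have hcontract (m : ∀ j, M j) :
      (∏ j ∈ {i}ᶜ, φ j (f j (m j))) • f i (m i) = (∏ j ∈ {i}ᶜ, φ j (m j)) • m i := by
    simpa [contractExcept_tprod] using
      congrArg (contractExcept φ i) (LinearMap.congr_fun hf (⨂ₜ[R] j, m j))
  have hupdate (j : ι) (hj : j ∈ ({i}ᶜ : Finset ι)) : Function.update x i v j = x j :=
    Function.update_of_ne (by simpa using hj) v x
  convert hcontract (Function.update x i v) using 2
  · exact Finset.prod_congr rfl fun j hj => by rw [hupdate j hj]
  · rw [Function.update_self]
  · exact Finset.prod_congr rfl fun j hj => by rw [hupdate j hj]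
  · rw [Function.update_self]

theorem eq_smul_id_of_piTensorProduct_map_eq_id [Finite ι] {f : ∀ j, M j →ₗ[R] M j}
    (hf : map f = LinearMap.id) {φ : ∀ j, Dual R (M j)} {x : ∀ j, M j}
    (hφ : ∀ j, φ j (x j) = 1) (i : ι) :
    f i = φ i (f i (x i)) • LinearMap.id := by
  classical
  have := Fintype.ofFinite ι
  let a (j : ι) : R := φ j (f j (x j))
  have ha_mul : a i * ∏ j ∈ {i}ᶜ, a j = 1 := by
    rw [← Fintype.prod_eq_mul_prod_compl i a, prod_apply_eq_of_piTensorProduct_map_eq_id hf φ x]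
    simp [hφ]
  have ha_smul (v : M i) : (∏ j ∈ {i}ᶜ, a j) • f i v = v := by
    simpa [hφ] using prod_compl_smul_apply_eq_of_piTensorProduct_map_eq_id hf φ x i v
  ext v
  calc f i v = (a i * ∏ j ∈ {i}ᶜ, a j) • f i v := by rw [ha_mul, one_smul]
    _ = a i • v := by rw [mul_smul, ha_smul]

end Family

theorem stmt3_general [Fintype ι] [Nonempty ι] {M : Type*} [AddCommMonoid M] [Module R M]
    {φ : Dual R M} (hφ : Function.Surjective φ) (g : M →ₗ[R] M)
    (hg : map (fun _ : ι => g) = LinearMap.id) :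
    ∃ lam : R, lam ^ Fintype.card ι = 1 ∧ g = lam • LinearMap.id := by
  obtain ⟨x, hx⟩ := hφ 1
  refine ⟨φ (g x), ?_, ?_⟩
  · simpa [hx] using prod_apply_eq_of_piTensorProduct_map_eq_id hg (fun _ => φ) fun _ => x
  · exact eq_smul_id_of_piTensorProduct_map_eq_id hg (fun _ => hx) (Classical.arbitrary ι)

end

/-- If an automorphism `g` of a nonzero `K`-vector space `V` induces the identity on the
`r`-fold tensor power `V^⊗r` (`r ≥ 1`), then `g = λ·id` for some `λ ∈ K` with `λ^r = 1`. -/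
theorem stmt3 (K V : Type*) [Field K] [AddCommGroup V] [Module K V] [Nontrivial V]
    (r : ℕ) (hr : 1 ≤ r) (g : V ≃ₗ[K] V)
    (hg : PiTensorProduct.map (fun _ : Fin r => g.toLinearMap)
        = (LinearMap.id : (⨂[K] _ : Fin r, V) →ₗ[K] ⨂[K] _ : Fin r, V)) :
    ∃ lam : K, lam ^ r = 1 ∧ g.toLinearMap = lam • (LinearMap.id : V →ₗ[K] V) := by
  have : NeZero r := ⟨Nat.one_le_iff_ne_zero.mp hr⟩
  obtain ⟨φ, hφ⟩ := exists_ne (0 : Module.Dual K V)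
  simpa using stmt3_general (LinearMap.surjective hφ) g.toLinearMap hg
end

section
/- Let R be a commutative ring in which 2 is invertible. For an R-module U, let Sym²U denote the submodule of U ⊗_R U consisting of tensors fixed by the flip u ⊗ v ↦ v ⊗ u, and let Λ²U denote the submodule of tensors negated by the flip. Let d ≥ 1 and let V₁, …, V_d be R-modules, with T = V₁ ⊗_R ⋯ ⊗_R V_d. For a subset S ⊆ {1, …, d}, let D_S denote the tensor product over R, in the order of the indices, of Sym²V_i for i ∈ S and Λ²V_i for i ∉ S. Then there are R-module isomorphisms Λ²T ≅ ⊕_{S : d−|S| odd} D_S and Sym²T ≅ ⊕_{S : d−|S| even} D_S. -/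
open scoped TensorProduct DirectSum

/-- The submodule of `U ⊗ U` consisting of tensors fixed by the flip `u ⊗ v ↦ v ⊗ u`. -/
noncomputable def symTwo (R U : Type*) [CommRing R] [AddCommGroup U] [Module R U] :
    Submodule R (U ⊗[R] U) :=
  LinearMap.ker ((TensorProduct.comm R U U).toLinearMap - LinearMap.id)

/-- The submodule of `U ⊗ U` consisting of tensors negated by the flip `u ⊗ v ↦ v ⊗ u`. -/
noncomputable def altTwo (R U : Type*) [CommRing R] [AddCommGroup U] [Module R U] :
    Submodule R (U ⊗[R] U) :=
  LinearMap.ker ((TensorProduct.comm R U U).toLinearMap + LinearMap.id)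

/-!
Since `2` is invertible, `Vᵢ ⊗ Vᵢ` is the direct sum of the eigenspaces `symTwo R (V i)` and
`altTwo R (V i)` of its flip, with eigenvalues `1` and `-1`. Rearranging factors identifies
`T ⊗ T` with `⨂ᵢ (Vᵢ ⊗ Vᵢ)` and the flip of `T ⊗ T` with the tensor product of the flips.
Distributing the tensor product over the direct sums makes the flip act on the summand `D_S` as
`(-1) ^ (d - |S|)`. As `1 - (-1) = 2` is a unit, the summands with eigenvalue `1` fill up the whole
eigenspace of `1`, and likewise for `-1`.
-/

section Diagonalization

variable {R : Type*} [CommSemiring R] {M : Type*} [AddCommMonoid M] [Module R M]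
  {κ : Type*} {D : κ → Type*} [∀ k, AddCommMonoid (D k)] [∀ k, Module R (D k)]
  {τ : Module.End R M} {e : M ≃ₗ[R] ⨁ k, D k} {μ : κ → R}

/-- The equivalence `e` diagonalizes `τ`: it identifies `M` with a direct sum on whose `k`-th
summand `τ` acts as the scalar `μ k`. Distinct summands may carry the same scalar. -/
def IsDiagonalizedBy (τ : Module.End R M) (e : M ≃ₗ[R] ⨁ k, D k) (μ : κ → R) : Prop :=
  ∀ x k, e (τ x) k = μ k • e x k

theorem exists_isDiagonalizedBy_of_isInternal [DecidableEq κ] {A : κ → Submodule R M}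
    (hA : DirectSum.IsInternal A) (h : ∀ k, ∀ x ∈ A k, τ x = μ k • x) :
    ∃ e : M ≃ₗ[R] ⨁ k, A k, IsDiagonalizedBy τ e μ := by
  let f : (⨁ k, A k) ≃ₗ[R] M :=
    .ofBijective (DirectSum.coeLinearMap A) (show Function.Bijective _ from hA)
  have f_of (k) (y : A k) : f (DirectSum.of _ k y) = y := DirectSum.coeLinearMap_of A k y
  refine ⟨f.symm, fun x k => ?_⟩
  obtain ⟨y, rfl⟩ := f.surjective x
  rw [f.symm_apply_apply]
  induction y using DirectSum.induction_on with
  | zero => simp only [map_zero, DirectSum.zero_apply, smul_zero]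
  | of j y =>
    rw [f_of, h j y y.2, ← f_of, map_smul, f.symm_apply_apply, DirectSum.smul_apply]
    obtain rfl | hjk := eq_or_ne j k
    · rfl
    · rw [DirectSum.of_eq_of_ne _ _ _ hjk.symm, smul_zero, smul_zero]
  | add y z hy hz => simp only [map_add, DirectSum.add_apply, hy, hz, smul_add]

namespace IsDiagonalizedBy

theorem comp_linearEquiv {N : Type*} [AddCommMonoid N] [Module R N] {σ : Module.End R N}
    (h : IsDiagonalizedBy τ e μ) (f : N ≃ₗ[R] M) (hf : ∀ x, f (σ x) = τ (f x)) :
    IsDiagonalizedBy σ (f ≪≫ₗ e) μ := fun x k => by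
  simp only [LinearEquiv.trans_apply, hf, h (f x) k]

theorem reindex {κ' : Type*} {D' : κ' → Type*} [∀ k, AddCommMonoid (D' k)]
    [∀ k, Module R (D' k)] (h : IsDiagonalizedBy τ e μ) (g : κ' ≃ κ)
    (f : ∀ k, D (g k) ≃ₗ[R] D' k) :
    IsDiagonalizedBy τ
      (e ≪≫ₗ DirectSum.lequivCongrLeft R g.symm ≪≫ₗ DirectSum.congrLinearEquiv f) (μ ∘ g) :=
  fun x k => (congrArg (f k) (h x (g k))).trans (map_smul (f k) _ _)

theorem piTensorProduct {ι : Type*} [Fintype ι] {M : ι → Type*} [∀ i, AddCommMonoid (M i)]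
    [∀ i, Module R (M i)] {κ : ι → Type*} {D : ∀ i, κ i → Type*} [∀ i k, AddCommMonoid (D i k)]
    [∀ i k, Module R (D i k)] {τ : ∀ i, Module.End R (M i)} {e : ∀ i, M i ≃ₗ[R] ⨁ k, D i k}
    {μ : ∀ i, κ i → R} (h : ∀ i, IsDiagonalizedBy (τ i) (e i) (μ i)) :
    IsDiagonalizedBy (PiTensorProduct.map τ)
      (PiTensorProduct.congr e ≪≫ₗ PiTensorProduct.ofDirectSumEquiv)
      (fun k => ∏ i, μ i (k i)) := by
  intro x k
  induction x using PiTensorProduct.induction_on with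
  | smul_tprod r x =>
    simp [DirectSum.smul_apply, h _ _ _, MultilinearMap.map_smul_univ, smul_comm r]
  | add x y hx hy => simp only [map_add, DirectSum.add_apply, hx, hy, smul_add]

end IsDiagonalizedBy

end Diagonalization

namespace IsDiagonalizedBy

variable {R : Type*} [CommRing R] {M : Type*} [AddCommGroup M] [Module R M]
  {κ : Type*} {D : κ → Type*} [∀ k, AddCommMonoid (D k)] [∀ k, Module R (D k)]
  {τ : Module.End R M} {e : M ≃ₗ[R] ⨁ k, D k} {μ : κ → R}

theorem apply_eq_zero_of_mem_eigenspace (h : IsDiagonalizedBy τ e μ) {c : R} {k : κ}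
    (hk : IsUnit (μ k - c)) {x : M} (hx : x ∈ τ.eigenspace c) : e x k = 0 := by
  let := Module.addCommMonoidToAddCommGroup R (M := D k)
  have hxk := h x k
  rw [Module.End.mem_eigenspace_iff.1 hx, map_smul, DirectSum.smul_apply] at hxk
  rw [← hk.smul_eq_zero, sub_smul, hxk, sub_self]

theorem symm_of_mem_eigenspace [DecidableEq κ] (h : IsDiagonalizedBy τ e μ) (k : κ) (y : D k) :
    e.symm (DirectSum.of D k y) ∈ τ.eigenspace (μ k) := by
  rw [Module.End.mem_eigenspace_iff, ← e.injective.eq_iff]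
  ext j : 1
  rw [h, map_smul, e.apply_symm_apply, DirectSum.smul_apply]
  obtain rfl | hjk := eq_or_ne j k
  · rfl
  · rw [DirectSum.of_eq_of_ne _ _ _ hjk, smul_zero, smul_zero]

theorem nonempty_eigenspace_linearEquiv (h : IsDiagonalizedBy τ e μ) {c : R} {p : κ → Prop}
    (hp : ∀ k, p k → μ k = c) (hp' : ∀ k, ¬p k → IsUnit (μ k - c)) :
    Nonempty (τ.eigenspace c ≃ₗ[R] ⨁ k : {k // p k}, D k) := by
  classical
  let f : τ.eigenspace c →ₗ[R] ⨁ k : {k // p k}, D k :=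
    DFinsupp.subtypeDomainLinearMap R D p ∘ₗ e.toLinearMap ∘ₗ (τ.eigenspace c).subtype
  have f_apply (x k) : f x k = e x k.1 := rfl
  refine ⟨.ofBijective f ⟨fun x x' hxx' => ?_, fun y => ?_⟩⟩
  · refine Subtype.ext (e.injective (DFinsupp.ext fun k => ?_))
    by_cases hk : p k
    · exact DFunLike.congr_fun hxx' ⟨k, hk⟩
    · rw [h.apply_eq_zero_of_mem_eigenspace (hp' k hk) x.2,
        h.apply_eq_zero_of_mem_eigenspace (hp' k hk) x'.2]
  · induction y using DirectSum.induction_on with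
    | zero => exact ⟨0, map_zero f⟩
    | of k y =>
      refine ⟨⟨e.symm (DirectSum.of D k y), hp k k.2 ▸ h.symm_of_mem_eigenspace k y⟩, ?_⟩
      ext j : 1
      rw [f_apply, e.apply_symm_apply]
      obtain rfl | hjk := eq_or_ne j k
      · rw [DirectSum.of_eq_same, DirectSum.of_eq_same]
      · rw [DirectSum.of_eq_of_ne _ _ _ hjk,
          DirectSum.of_eq_of_ne _ _ _ (Subtype.coe_injective.ne hjk)]
    | add y z hy hz =>
      obtain ⟨x, rfl⟩ := hy
      obtain ⟨x', rfl⟩ := hz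
      exact ⟨x + x', map_add f x x'⟩

end IsDiagonalizedBy

theorem isCompl_eigenspace_of_involutive {R M : Type*} [CommRing R] [AddCommGroup M] [Module R M]
    (h2 : IsUnit (2 : R)) {τ : Module.End R M} (hτ : Function.Involutive τ) :
    IsCompl (τ.eigenspace 1) (τ.eigenspace (-1)) := by
  constructor
  · refine Submodule.disjoint_def.2 fun x hx hx' => ?_
    rw [Module.End.mem_eigenspace_iff] at hx hx'
    have x_eq_neg : x = -x := by rw [← neg_one_smul R x, ← hx', hx, one_smul]
    rwa [← h2.smul_eq_zero, two_smul, ← eq_neg_iff_add_eq_zero]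
  · obtain ⟨c, hc⟩ := h2.exists_left_inv
    refine Submodule.codisjoint_iff_exists_add_eq.2 fun x =>
      ⟨c • (x + τ x), c • (x - τ x), ?_, ?_, ?_⟩
    · rw [Module.End.mem_eigenspace_iff, map_smul, map_add, hτ x, add_comm, one_smul]
    · rw [Module.End.mem_eigenspace_iff, map_smul, map_sub, hτ x, neg_one_smul, ← smul_neg,
        neg_sub]
    · rw [← smul_add, add_add_sub_cancel, ← two_smul R, smul_smul, hc, one_smul]

section TensorPi

variable {R : Type*} [CommSemiring R] {ι : Type*}

theorem prod_singleAlgHom [Fintype ι] [DecidableEq ι] {A : ι → Type*}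
    [∀ i, CommSemiring (A i)] [∀ i, Algebra R (A i)] (x : ∀ i, A i) :
    ∏ i, PiTensorProduct.singleAlgHom (R := R) i (x i) = ⨂ₜ[R] i, x i := by
  rw [← Finset.univ_prod_mulSingle x, PiTensorProduct.tprod_prod, Finset.univ_prod_mulSingle]
  rfl

theorem exists_linearMap_tprod_tmul_of_algebra [Finite ι] (A B : ι → Type*)
    [∀ i, CommSemiring (A i)] [∀ i, Algebra R (A i)] [∀ i, CommSemiring (B i)]
    [∀ i, Algebra R (B i)] :
    ∃ g : (⨂[R] i, (A i ⊗[R] B i)) →ₗ[R] (⨂[R] i, A i) ⊗[R] (⨂[R] i, B i),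
      ∀ (x : ∀ i, A i) (y : ∀ i, B i),
        g (⨂ₜ[R] i, (x i ⊗ₜ y i)) = (⨂ₜ[R] i, x i) ⊗ₜ (⨂ₜ[R] i, y i) := by
  classical
  have := Fintype.ofFinite ι
  refine ⟨PiTensorProduct.lift ((MultilinearMap.mkPiAlgebra R ι _).compLinearMap fun i =>
    TensorProduct.map (PiTensorProduct.singleAlgHom i).toLinearMap
      (PiTensorProduct.singleAlgHom i).toLinearMap), fun x y => ?_⟩
  have tmul_eq_mul (a : ⨂[R] i, A i) (b : ⨂[R] i, B i) : a ⊗ₜ[R] b =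
      Algebra.TensorProduct.includeLeft (S := R) a * Algebra.TensorProduct.includeRight b := by
    simp
  simp only [PiTensorProduct.lift.tprod, MultilinearMap.compLinearMap_apply,
    TensorProduct.map_tmul, AlgHom.toLinearMap_apply, MultilinearMap.mkPiAlgebra_apply,
    tmul_eq_mul, Finset.prod_mul_distrib, ← map_prod, prod_singleAlgHom]

variable (R) (V W : ι → Type*) [∀ i, AddCommMonoid (V i)] [∀ i, Module R (V i)]
  [∀ i, AddCommMonoid (W i)] [∀ i, Module R (W i)]

/- Each module is a retract of a commutative algebra, its trivial square-zero extension, so the map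
can be built from products in the algebra case. -/
theorem exists_linearMap_tprod_tmul [Finite ι] :
    ∃ g : (⨂[R] i, (V i ⊗[R] W i)) →ₗ[R] (⨂[R] i, V i) ⊗[R] (⨂[R] i, W i),
      ∀ (x : ∀ i, V i) (y : ∀ i, W i),
        g (⨂ₜ[R] i, (x i ⊗ₜ y i)) = (⨂ₜ[R] i, x i) ⊗ₜ (⨂ₜ[R] i, y i) := by
  let _ : ∀ i, Module Rᵐᵒᵖ (V i) := fun i =>
    Module.compHom (V i) ((RingHom.id R).fromOpposite fun _ _ => mul_comm _ _)
  let _ : ∀ i, Module Rᵐᵒᵖ (W i) := fun i =>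
    Module.compHom (W i) ((RingHom.id R).fromOpposite fun _ _ => mul_comm _ _)
  have : ∀ i, IsCentralScalar R (V i) := fun i => ⟨fun _ _ => rfl⟩
  have : ∀ i, IsCentralScalar R (W i) := fun i => ⟨fun _ _ => rfl⟩
  obtain ⟨g, hg⟩ := exists_linearMap_tprod_tmul_of_algebra (R := R)
    (fun i => TrivSqZeroExt R (V i)) (fun i => TrivSqZeroExt R (W i))
  refine ⟨TensorProduct.map (PiTensorProduct.map fun i => TrivSqZeroExt.sndHom R (V i))
      (PiTensorProduct.map fun i => TrivSqZeroExt.sndHom R (W i)) ∘ₗ g ∘ₗ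
    PiTensorProduct.map fun i => TensorProduct.map (TrivSqZeroExt.inrHom R (V i))
      (TrivSqZeroExt.inrHom R (W i)), fun x y => ?_⟩
  simp [hg]

variable {R V W}

theorem piTensorProduct_tmul_ext [Finite ι] {N : Type*} [AddCommMonoid N] [Module R N]
    {f g : (⨂[R] i, (V i ⊗[R] W i)) →ₗ[R] N}
    (h : ∀ (x : ∀ i, V i) (y : ∀ i, W i),
      f (⨂ₜ[R] i, (x i ⊗ₜ y i)) = g (⨂ₜ[R] i, (x i ⊗ₜ y i))) : f = g := by
  refine PiTensorProduct.ext_of_span_eq_top (γ := fun i => V i × W i)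
    (g := fun i z => z.1 ⊗ₜ[R] z.2) (fun i => ?_)
    (fun z => h (fun i => (z i).1) (fun i => (z i).2))
  rw [← TensorProduct.span_tmul_eq_top R (V i) (W i)]
  congr 1
  ext t
  simp

variable (R V W) in
/-- The canonical equivalence `(⨂ᵢ Vᵢ) ⊗ (⨂ᵢ Wᵢ) ≃ ⨂ᵢ (Vᵢ ⊗ Wᵢ)`, which carries a flip of tensor
products to the product of the flips of the factors. -/
noncomputable def tensorPiTensorEquiv [Finite ι] :
    ((⨂[R] i, V i) ⊗[R] (⨂[R] i, W i)) ≃ₗ[R] ⨂[R] i, (V i ⊗[R] W i) :=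
  .ofLinearMap
    (TensorProduct.lift (PiTensorProduct.map₂ fun i => TensorProduct.mk R (V i) (W i)))
    (exists_linearMap_tprod_tmul R V W).choose
    (piTensorProduct_tmul_ext fun x y => by
      simp [(exists_linearMap_tprod_tmul R V W).choose_spec, PiTensorProduct.map₂_tprod_tprod])
    (by
      ext x y
      simp [(exists_linearMap_tprod_tmul R V W).choose_spec, PiTensorProduct.map₂_tprod_tprod])

@[simp]
theorem tensorPiTensorEquiv_tprod_tmul_tprod [Finite ι] (x : ∀ i, V i) (y : ∀ i, W i) :
    tensorPiTensorEquiv R V W ((⨂ₜ[R] i, x i) ⊗ₜ (⨂ₜ[R] i, y i)) = ⨂ₜ[R] i, (x i ⊗ₜ y i) := by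
  simp [tensorPiTensorEquiv, PiTensorProduct.map₂_tprod_tprod]

theorem tensorPiTensorEquiv_comm [Finite ι] (t : (⨂[R] i, V i) ⊗[R] (⨂[R] i, W i)) :
    tensorPiTensorEquiv R W V (TensorProduct.comm R _ _ t) =
      PiTensorProduct.map (fun i => (TensorProduct.comm R (V i) (W i)).toLinearMap)
        (tensorPiTensorEquiv R V W t) := by
  suffices (tensorPiTensorEquiv R W V).toLinearMap ∘ₗ (TensorProduct.comm R _ _).toLinearMap =
      PiTensorProduct.map (fun i => (TensorProduct.comm R (V i) (W i)).toLinearMap) ∘ₗ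
        (tensorPiTensorEquiv R V W).toLinearMap from LinearMap.congr_fun this t
  ext x y
  simp

end TensorPi

section Flip

variable (R U : Type*) [CommRing R] [AddCommGroup U] [Module R U]

theorem symTwo_eq_eigenspace :
    symTwo R U = Module.End.eigenspace (TensorProduct.comm R U U).toLinearMap 1 := by
  ext x
  simp [symTwo, sub_eq_zero]

theorem altTwo_eq_eigenspace :
    altTwo R U = Module.End.eigenspace (TensorProduct.comm R U U).toLinearMap (-1) := by
  ext x
  simp [altTwo, add_eq_zero_iff_eq_neg]

variable {R}

theorem isInternal_symTwo_altTwo (h2 : IsUnit (2 : R)) :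
    DirectSum.IsInternal fun b : Bool => if b then symTwo R U else altTwo R U := by
  refine (DirectSum.isInternal_submodule_iff_isCompl _ (i := true) (j := false) (by decide)
    (by ext b; cases b <;> simp)).2 ?_
  simpa [symTwo_eq_eigenspace, altTwo_eq_eigenspace] using isCompl_eigenspace_of_involutive h2
    (τ := (TensorProduct.comm R U U).toLinearMap) (TensorProduct.comm R U U).symm_apply_apply

theorem exists_isDiagonalizedBy_comm (h2 : IsUnit (2 : R)) :
    ∃ e : (U ⊗[R] U) ≃ₗ[R] ⨁ b : Bool, ↥(if b then symTwo R U else altTwo R U),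
      IsDiagonalizedBy (TensorProduct.comm R U U).toLinearMap e
        fun b : Bool => if b then 1 else -1 := by
  refine exists_isDiagonalizedBy_of_isInternal (isInternal_symTwo_altTwo U h2) fun b x hx => ?_
  cases b
  · rw [if_neg Bool.false_ne_true, altTwo_eq_eigenspace] at hx
    exact Module.End.mem_eigenspace_iff.1 hx
  · rw [if_pos rfl, symTwo_eq_eigenspace] at hx
    exact Module.End.mem_eigenspace_iff.1 hx

end Flip

/-- The indicator function of a finite set, as an equivalence. It turns the choice of a summand of
`Vᵢ ⊗ Vᵢ` for every `i` into the set of those `i` for which `symTwo R (V i)` is chosen. -/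
def finsetEquivBool (ι : Type*) [Fintype ι] [DecidableEq ι] : Finset ι ≃ (ι → Bool) where
  toFun S i := decide (i ∈ S)
  invFun b := {i | b i}
  left_inv S := by ext; simp
  right_inv b := by ext; simp

theorem prod_ite_mem_one {M ι : Type*} [CommMonoid M] [Fintype ι] [DecidableEq ι]
    (S : Finset ι) (a : M) :
    ∏ i, (if i ∈ S then 1 else a) = a ^ (Fintype.card ι - S.card) := by
  rw [Finset.prod_ite, Finset.prod_const_one, one_mul, Finset.prod_const,
    Finset.filter_notMem_eq_sdiff, Finset.card_univ_sdiff]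

theorem exists_isDiagonalizedBy_comm_piTensorProduct {R : Type*} [CommRing R]
    (h2 : IsUnit (2 : R)) {ι : Type*} [Fintype ι] [DecidableEq ι] (V : ι → Type*)
    [∀ i, AddCommGroup (V i)] [∀ i, Module R (V i)] :
    ∃ e : ((⨂[R] i, V i) ⊗[R] (⨂[R] i, V i)) ≃ₗ[R]
        ⨁ S : Finset ι, ⨂[R] i, ↥(if i ∈ S then symTwo R (V i) else altTwo R (V i)),
      IsDiagonalizedBy (TensorProduct.comm R _ _).toLinearMap e
        fun S => (-1) ^ (Fintype.card ι - S.card) := by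
  choose e he using fun i => exists_isDiagonalizedBy_comm (V i) h2
  have h := ((IsDiagonalizedBy.piTensorProduct he).comp_linearEquiv (tensorPiTensorEquiv R V V)
    tensorPiTensorEquiv_comm).reindex (finsetEquivBool ι)
      (D' := fun S => ⨂[R] i, ↥(if i ∈ S then symTwo R (V i) else altTwo R (V i)))
      fun S => PiTensorProduct.congr fun i => .ofEq _ _ (by simp [finsetEquivBool])
  refine ⟨_, fun x S => (h x S).trans ?_⟩
  simp [finsetEquivBool, prod_ite_mem_one]

theorem stmt9_general (R : Type*) [CommRing R] (h2 : IsUnit (2 : R))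
    {ι : Type*} [Fintype ι] [DecidableEq ι] (V : ι → Type*)
    [∀ i, AddCommGroup (V i)] [∀ i, Module R (V i)] :
    Nonempty ((altTwo R (⨂[R] i, V i)) ≃ₗ[R]
        ⨁ S : {S : Finset ι // Odd (Fintype.card ι - S.card)},
          ⨂[R] i, ↥(if i ∈ (S : Finset ι) then symTwo R (V i) else altTwo R (V i))) ∧
    Nonempty ((symTwo R (⨂[R] i, V i)) ≃ₗ[R]
        ⨁ S : {S : Finset ι // Even (Fintype.card ι - S.card)},
          ⨂[R] i, ↥(if i ∈ (S : Finset ι) then symTwo R (V i) else altTwo R (V i))) := by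
  obtain ⟨e, he⟩ := exists_isDiagonalizedBy_comm_piTensorProduct h2 V
  rw [altTwo_eq_eigenspace R (⨂[R] i, V i), symTwo_eq_eigenspace R (⨂[R] i, V i)]
  constructor
  · refine he.nonempty_eigenspace_linearEquiv (fun S hS => hS.neg_one_pow) fun S hS => ?_
    rw [(Nat.not_odd_iff_even.1 hS).neg_one_pow, sub_neg_eq_add, one_add_one_eq_two]
    exact h2
  · refine he.nonempty_eigenspace_linearEquiv (fun S hS => hS.neg_one_pow) fun S hS => ?_
    rw [(Nat.not_even_iff_odd.1 hS).neg_one_pow, ← neg_add', one_add_one_eq_two]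
    exact h2.neg

/-- Over a commutative ring in which `2` is invertible, for `T = V₁ ⊗ ⋯ ⊗ V_d` one has
`Λ²T ≅ ⊕_{S : d - |S| odd} D_S` and `Sym²T ≅ ⊕_{S : d - |S| even} D_S`, where
`D_S = ⊗_i (Sym²Vᵢ if i ∈ S else Λ²Vᵢ)` in the order of the indices. -/
theorem stmt9 (R : Type*) [CommRing R] (h2 : IsUnit (2 : R))
    (d : ℕ) (hd : 1 ≤ d) (V : Fin d → Type*)
    [∀ i, AddCommGroup (V i)] [∀ i, Module R (V i)] :
    Nonempty ((altTwo R (⨂[R] i, V i)) ≃ₗ[R]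
        ⨁ S : {S : Finset (Fin d) // Odd (d - S.card)},
          ⨂[R] i : Fin d,
            ↥(if i ∈ (S : Finset (Fin d)) then symTwo R (V i) else altTwo R (V i))) ∧
    Nonempty ((symTwo R (⨂[R] i, V i)) ≃ₗ[R]
        ⨁ S : {S : Finset (Fin d) // Even (d - S.card)},
          ⨂[R] i : Fin d,
            ↥(if i ∈ (S : Finset (Fin d)) then symTwo R (V i) else altTwo R (V i))) := by
  have h := stmt9_general R h2 V
  rwa [Fintype.card_fin] at h
end

section
/- Let K be a field and let V₁ and V₂ be nonzero K-vector spaces. Let A be a K-linear endomorphism of V₁ and B a K-linear endomorphism of V₂. If A ⊗ id_{V₂} + id_{V₁} ⊗ B = 0 as an endomorphism of V₁ ⊗_K V₂, then there exists c ∈ K such that A = c·id_{V₁} and B = −c·id_{V₂}. In particular, if moreover A and B are nilpotent, then A = 0 and B = 0. -/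
open TensorProduct

/-!
If `A ⊗ id = id ⊗ B`, then contracting the second factor of `A x ⊗ w = x ⊗ B w` with a functional
`g` such that `g w = 1` gives `A x = g (B w) • x`, so `A` is a scalar; by symmetry so is `B`, and a
contraction of the first factor shows that the two scalars agree. The vanishing of the Kronecker sum
of `A` and `B` is the case of `A` and `-B`. A scalar acting nilpotently on a faithful module is
nilpotent, hence zero over a reduced ring.
-/

section CommSemiring

variable {R M N : Type*} [CommSemiring R] [AddCommMonoid M] [Module R M]
  [AddCommMonoid N] [Module R N]

theorem exists_dual_apply_eq_one [Module.Free R M] [Nontrivial M] :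
    ∃ (v : M) (f : Module.Dual R M), f v = 1 := by
  have b := Module.Free.chooseBasis R M
  obtain ⟨i⟩ := b.index_nonempty
  exact ⟨b i, b.coord i, by simp⟩

theorem isNilpotent_smul_id_iff [FaithfulSMul R M] {c : R} :
    IsNilpotent (c • LinearMap.id : M →ₗ[R] M) ↔ IsNilpotent c := by
  have h_inj : Function.Injective (algebraMap R (Module.End R M)) := fun _ _ h ↦
    FaithfulSMul.eq_of_smul_eq_smul fun x : M ↦ congr($h x)
  rw [← Module.algebraMap_end_eq_smul_id]
  exact IsNilpotent.map_iff h_inj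

variable {A : M →ₗ[R] M} {B : N →ₗ[R] N}

theorem map_id_eq_map_id_swap (h : map A LinearMap.id = map LinearMap.id B) :
    map B LinearMap.id = map LinearMap.id A := by
  ext y x
  simpa using congr(TensorProduct.comm R M N ($h (x ⊗ₜ y))).symm

theorem dual_apply_smul_eq_of_map_id_eq_map_id (h : map A LinearMap.id = map LinearMap.id B)
    (g : Module.Dual R N) (w : N) : g w • A = g (B w) • LinearMap.id := by
  ext x
  simpa using congr(TensorProduct.rid R M (g.lTensor M ($h (x ⊗ₜ w))))

theorem exists_eq_smul_id_of_map_id_eq_map_id [Module.Free R M] [Nontrivial M]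
    [Module.Free R N] [Nontrivial N] (h : map A LinearMap.id = map LinearMap.id B) :
    ∃ c : R, A = c • LinearMap.id ∧ B = c • LinearMap.id := by
  obtain ⟨v, f, hf⟩ := exists_dual_apply_eq_one (R := R) (M := M)
  obtain ⟨w, g, hg⟩ := exists_dual_apply_eq_one (R := R) (M := N)
  have hA : A = g (B w) • LinearMap.id := by
    simpa only [hg, one_smul] using dual_apply_smul_eq_of_map_id_eq_map_id h g w
  have hB : B = f (A v) • LinearMap.id := by
    simpa only [hf, one_smul] using
      dual_apply_smul_eq_of_map_id_eq_map_id (map_id_eq_map_id_swap h) f v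
  have hc : f (A v) = g (B w) := by
    simpa [hf] using congr(f ($hA v))
  exact ⟨g (B w), hA, hc ▸ hB⟩

end CommSemiring

section CommRing

variable {R M N : Type*} [CommRing R] [AddCommGroup M] [Module R M] [Module.Free R M] [Nontrivial M]
  [AddCommGroup N] [Module R N] [Module.Free R N] [Nontrivial N]
  {A : M →ₗ[R] M} {B : N →ₗ[R] N}

theorem exists_eq_smul_id_of_map_id_add_map_id_eq_zero
    (h : map A LinearMap.id + map LinearMap.id B = 0) :
    ∃ c : R, A = c • LinearMap.id ∧ B = (-c) • LinearMap.id := by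
  have h_neg : map A LinearMap.id = map LinearMap.id (-B) := by
    rw [eq_neg_of_add_eq_zero_left h]
    exact (LinearMap.lTensor_neg B).symm
  obtain ⟨c, hA, hB⟩ := exists_eq_smul_id_of_map_id_eq_map_id h_neg
  exact ⟨c, hA, by rw [neg_smul, ← hB, neg_neg]⟩

theorem stmt12_general [IsReduced R] (h : map A LinearMap.id + map LinearMap.id B = 0) :
    (∃ c : R, A = c • LinearMap.id ∧ B = (-c) • LinearMap.id) ∧
    (IsNilpotent A ∨ IsNilpotent B → A = 0 ∧ B = 0) := by
  obtain ⟨c, rfl, rfl⟩ := exists_eq_smul_id_of_map_id_add_map_id_eq_zero h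
  refine ⟨⟨c, rfl, rfl⟩, fun h_nil ↦ ?_⟩
  have hc : c = 0 := by
    simpa only [isNilpotent_smul_id_iff, isNilpotent_iff_eq_zero, neg_eq_zero, or_self]
      using h_nil
  simp [hc]

end CommRing

/-- If the Kronecker sum `A ⊗ id + id ⊗ B` of endomorphisms of nonzero vector spaces
`V₁`, `V₂` vanishes, then `A = c·id` and `B = -c·id` for some scalar `c`; in particular
if `A` and `B` are nilpotent then `A = 0` and `B = 0`. -/
theorem stmt12 (K V₁ V₂ : Type*) [Field K]
    [AddCommGroup V₁] [Module K V₁] [AddCommGroup V₂] [Module K V₂]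
    [Nontrivial V₁] [Nontrivial V₂]
    (A : V₁ →ₗ[K] V₁) (B : V₂ →ₗ[K] V₂)
    (h : TensorProduct.map A (LinearMap.id : V₂ →ₗ[K] V₂)
        + TensorProduct.map (LinearMap.id : V₁ →ₗ[K] V₁) B = 0) :
    (∃ c : K, A = c • (LinearMap.id : V₁ →ₗ[K] V₁)
        ∧ B = (-c) • (LinearMap.id : V₂ →ₗ[K] V₂)) ∧
    (IsNilpotent A → IsNilpotent B → A = 0 ∧ B = 0) := by
  have h_general := stmt12_general h
  exact ⟨h_general.1, fun hA _ ↦ h_general.2 (.inl hA)⟩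
end

section
/- Let K be an algebraically closed field and let V₁ and V₂ be nonzero finite-dimensional K-vector spaces. Call an endomorphism of a finite-dimensional K-vector space diagonalizable if the sum of its eigenspaces is the whole space. Let A be an endomorphism of V₁ and B an endomorphism of V₂. If the Kronecker sum A ⊗ id_{V₂} + id_{V₁} ⊗ B is a diagonalizable endomorphism of V₁ ⊗_K V₂, then A and B are each diagonalizable. -/
open TensorProduct

/-!
If `A x = a • x` with `x ≠ 0`, then `y ↦ x ⊗ₜ y` embeds `V₂` into `V₁ ⊗ V₂` and intertwines `B + a`
with the Kronecker sum `S` of `A` and `B`. Diagonalizability passes to invariant subspaces, so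
`B + a`, and hence `B`, is diagonalizable. Now `B` has an eigenvector, and the same argument with
the factors exchanged diagonalizes `A`.

Such an `x` exists even in infinite dimension. Let `w` be an eigenvector of `S`. The slices
`(id ⊗ φ) w`, with `φ` running through the linear forms on `V₂`, form a nonzero finite-dimensional
`A`-invariant subspace of `V₁`, because `A ((id ⊗ φ) w) = (id ⊗ (μ φ - φ ∘ B)) w` when `S w = μ w`.
-/

open Module (Dual End)

section Diagonalizable

/-- An endomorphism is diagonalizable if its eigenspaces span the module; in any dimension this
means that every vector is a finite sum of eigenvectors. -/
def IsDiagonalizable {R M : Type*} [CommRing R] [AddCommGroup M] [Module R M] (f : End R M) :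
    Prop :=
  ⨆ μ : R, f.eigenspace μ = ⊤

theorem IsDiagonalizable.exists_hasEigenvalue {R M : Type*} [CommRing R] [AddCommGroup M]
    [Module R M] [Nontrivial M] {f : End R M} (hf : IsDiagonalizable f) :
    ∃ μ, f.HasEigenvalue μ :=
  End.exists_hasEigenvalue_of_genEigenspace_eq_top 1 hf

theorem isDiagonalizable_add_algebraMap_iff {R M : Type*} [CommRing R] [AddCommGroup M]
    [Module R M] {f : End R M} {a : R} :
    IsDiagonalizable (f + algebraMap R (End R M) a) ↔ IsDiagonalizable f := by
  have h_shift : ∀ μ, (f + algebraMap R (End R M) a).eigenspace (a + μ) = f.eigenspace μ :=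
    fun μ => by
      ext x
      simp only [End.mem_eigenspace_iff, LinearMap.add_apply, Module.algebraMap_end_apply, add_smul,
        add_comm (a • x), add_left_inj]
  rw [IsDiagonalizable, IsDiagonalizable, ← (Equiv.addLeft a).iSup_comp]
  simp only [Equiv.coe_addLeft, h_shift]

variable {K V W : Type*} [Field K] [AddCommGroup V] [Module K V] [AddCommGroup W] [Module K W]

theorem mem_of_sum_mem_of_mem_eigenspace {f : End K V} {p : Submodule K V}
    (hp : ∀ x ∈ p, f x ∈ p) {s : Finset K} {v : K → V} (hv : ∀ μ ∈ s, v μ ∈ f.eigenspace μ)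
    (hsum : ∑ μ ∈ s, v μ ∈ p) {μ : K} (hμ : μ ∈ s) : v μ ∈ p := by
  -- In `V ⧸ p` the classes of the `v μ` lie in independent eigenspaces and add up to zero.
  have h_indep := (iSupIndep_iff_finsetSum_eq_zero_imp_eq_zero _).mp
    (End.eigenspaces_iSupIndep (p.mapQ p f hp))
  have h_eigen : ∀ ν ∈ s, p.mkQ (v ν) ∈ End.eigenspace (p.mapQ p f hp) ν := fun ν hν => by
    rw [End.mem_eigenspace_iff, Submodule.mkQ_apply, Submodule.mapQ_apply,
      End.mem_eigenspace_iff.mp (hv ν hν), Submodule.Quotient.mk_smul]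
  have h_zero : ∑ ν ∈ s, p.mkQ (v ν) = 0 := by
    rwa [← map_sum, Submodule.mkQ_apply, Submodule.Quotient.mk_eq_zero]
  exact (Submodule.Quotient.mk_eq_zero p).mp (h_indep s _ h_eigen h_zero μ hμ)

theorem IsDiagonalizable.of_injective {f : End K V} {g : End K W} (hg : IsDiagonalizable g)
    {i : V →ₗ[K] W} (hi : Function.Injective i) (h : ∀ x, g (i x) = i (f x)) :
    IsDiagonalizable f := by
  refine eq_top_iff.mpr fun x _ => ?_
  have hx : i x ∈ ⨆ μ, g.eigenspace μ := hg ▸ Submodule.mem_top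
  obtain ⟨w, hw, hsum⟩ := (Submodule.mem_iSup_iff_exists_finsupp _ _).mp hx
  have h_range : ∀ y ∈ LinearMap.range i, g y ∈ LinearMap.range i := by
    rintro _ ⟨y, rfl⟩
    exact ⟨f y, (h y).symm⟩
  have hw_range : ∀ μ ∈ w.support, w μ ∈ LinearMap.range i := fun μ hμ =>
    mem_of_sum_mem_of_mem_eigenspace h_range (fun ν _ => hw ν) ⟨x, hsum.symm⟩ hμ
  choose! v hv using hw_range
  have hx_sum : x = ∑ μ ∈ w.support, v μ :=
    hi (by rw [map_sum, Finset.sum_congr rfl hv]; exact hsum.symm)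
  rw [hx_sum]
  refine Submodule.sum_mem _ fun μ hμ => Submodule.mem_iSup_of_mem μ ?_
  refine End.mem_eigenspace_iff.mpr (hi ?_)
  rw [← h, map_smul, hv μ hμ, End.mem_eigenspace_iff.mp (hw μ)]

theorem exists_hasEigenvalue_of_invariant [IsAlgClosed K] {f : End K V} {p : Submodule K V}
    [FiniteDimensional K p] (hp : ∀ x ∈ p, f x ∈ p) (hp_ne : p ≠ ⊥) : ∃ μ, f.HasEigenvalue μ := by
  have : Nontrivial p := Submodule.nontrivial_iff_ne_bot.mpr hp_ne
  obtain ⟨μ, hμ⟩ := End.exists_eigenvalue (f.restrict hp)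
  refine ⟨μ, fun h_bot => hμ (End.eigenspace_restrict_eq_bot hp ?_)⟩
  exact disjoint_bot_left.mono_left h_bot.le

end Diagonalizable

section Slice

variable {R M N M' N' : Type*} [CommRing R] [AddCommGroup M] [Module R M] [AddCommGroup N]
  [Module R N] [AddCommGroup M'] [Module R M'] [AddCommGroup N'] [Module R N']

/-- The slice map `w ↦ (φ ↦ (id ⊗ φ) w)`, which contracts the second tensor factor with a linear
form. Over a field, the range of `slice w` is the smallest subspace `U` of `M` with `w ∈ U ⊗ N`. -/
noncomputable def slice : M ⊗[R] N →ₗ[R] Dual R N →ₗ[R] M :=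
  (LinearMap.lTensorHom M).flip.compr₂ (TensorProduct.rid R M).toLinearMap

@[simp]
theorem slice_tmul (x : M) (y : N) (φ : Dual R N) : slice (x ⊗ₜ[R] y) φ = φ y • x := by
  simp [slice]

theorem slice_map (f : M →ₗ[R] M') (g : N →ₗ[R] N') (w : M ⊗[R] N) (φ : Dual R N') :
    slice (TensorProduct.map f g w) φ = f (slice w (φ ∘ₗ g)) := by
  induction w with
  | zero => simp
  | tmul x y => simp
  | add w₁ w₂ h₁ h₂ => simp only [map_add, LinearMap.add_apply, h₁, h₂]

theorem slice_injective [Module.Free R N] :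
    Function.Injective (slice : M ⊗[R] N →ₗ[R] Dual R N →ₗ[R] M) := by
  let b := Module.Free.chooseBasis R N
  have h_coord : ∀ (w : M ⊗[R] N) i,
      slice w (b.coord i) = TensorProduct.equivFinsuppOfBasisRight b w i := fun w i => by
    induction w with
    | zero => simp
    | tmul x y => simp
    | add w₁ w₂ h₁ h₂ => simp only [map_add, LinearMap.add_apply, Finsupp.add_apply, h₁, h₂]
  intro w₁ w₂ h
  refine (TensorProduct.equivFinsuppOfBasisRight b).injective (Finsupp.ext fun i => ?_)
  rw [← h_coord, ← h_coord, h]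

theorem hasFiniteRange_slice [IsNoetherianRing R] (w : M ⊗[R] N) : (slice w).HasFiniteRange := by
  induction w with
  | zero => simp
  | tmul x y =>
    have h_factor :
        slice (x ⊗ₜ[R] y) = LinearMap.toSpanSingleton R M x ∘ₗ Dual.eval R N y := by
      ext φ
      simp
    rw [h_factor]
    exact LinearMap.HasFiniteRange.of_finite_dom.comp_right _
  | add w₁ w₂ h₁ h₂ =>
    rw [map_add]
    exact h₁.add h₂

theorem tmul_eq_zero_iff [IsDomain R] [Module.IsTorsionFree R M] [Module.Projective R N]
    {x : M} {y : N} : x ⊗ₜ[R] y = 0 ↔ x = 0 ∨ y = 0 := by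
  refine ⟨fun h => or_iff_not_imp_left.mpr fun hx => ?_, ?_⟩
  · refine (Module.forall_dual_apply_eq_zero_iff R y).mp fun φ => ?_
    have h_smul : φ y • x = 0 := by rw [← slice_tmul, h, map_zero, LinearMap.zero_apply]
    exact (smul_eq_zero.mp h_smul).resolve_right hx
  · rintro (rfl | rfl)
    exacts [TensorProduct.zero_tmul M y, TensorProduct.tmul_zero N x]

end Slice

section KroneckerSum

/-- The Kronecker sum `A ⊗ id + id ⊗ B`, the endomorphism of the tensor product `M ⊗ N` whose
diagonalizability is compared with that of `A` and `B`. -/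
noncomputable def kroneckerSum {R M N : Type*} [CommRing R] [AddCommGroup M] [Module R M]
    [AddCommGroup N] [Module R N] (A : End R M) (B : End R N) : End R (M ⊗[R] N) :=
  TensorProduct.map A LinearMap.id + TensorProduct.map LinearMap.id B

theorem apply_slice_of_mem_eigenspace_kroneckerSum {R M N : Type*} [CommRing R] [AddCommGroup M]
    [Module R M] [AddCommGroup N] [Module R N] {A : End R M} {B : End R N} {μ : R}
    {w : M ⊗[R] N} (hw : w ∈ (kroneckerSum A B).eigenspace μ) (φ : Dual R N) :
    A (slice w φ) = slice w (μ • φ - φ ∘ₗ B) := by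
  have h_sum : A (slice w φ) + slice w (φ ∘ₗ B) = μ • slice w φ := by
    have h := congrArg (fun t => slice t φ) (End.mem_eigenspace_iff.mp hw)
    simpa only [kroneckerSum, LinearMap.add_apply, map_add, map_smul, LinearMap.smul_apply,
      slice_map, LinearMap.comp_id, LinearMap.id_apply] using h
  rw [map_sub, map_smul, ← h_sum, add_sub_cancel_right]

variable {K V₁ V₂ : Type*} [Field K] [AddCommGroup V₁] [Module K V₁] [AddCommGroup V₂] [Module K V₂]
  {A : End K V₁} {B : End K V₂}

theorem exists_hasEigenvalue_left_of_kroneckerSum [IsAlgClosed K] {μ : K}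
    (hμ : (kroneckerSum A B).HasEigenvalue μ) : ∃ a, A.HasEigenvalue a := by
  obtain ⟨w, hw_mem, hw_ne⟩ := hμ.exists_hasEigenvector
  have : FiniteDimensional K (LinearMap.range (slice w)) :=
    Module.Finite.of_fg (hasFiniteRange_slice w)
  refine exists_hasEigenvalue_of_invariant (p := LinearMap.range (slice w)) ?_ ?_
  · rintro _ ⟨φ, rfl⟩
    exact ⟨_, (apply_slice_of_mem_eigenspace_kroneckerSum hw_mem φ).symm⟩
  · rwa [Ne, LinearMap.range_eq_bot, map_eq_zero_iff _ slice_injective]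

theorem IsDiagonalizable.left_of_kroneckerSum (h : IsDiagonalizable (kroneckerSum A B)) {b : K}
    (hb : B.HasEigenvalue b) : IsDiagonalizable A := by
  obtain ⟨y, hy⟩ := hb.exists_hasEigenvector
  have h_inj : Function.Injective ((TensorProduct.mk K V₁ V₂).flip y) :=
    (injective_iff_map_eq_zero _).mpr fun x hx => (tmul_eq_zero_iff.mp hx).resolve_right hy.2
  refine (isDiagonalizable_add_algebraMap_iff (a := b)).mp (h.of_injective h_inj fun x => ?_)
  simp [kroneckerSum, hy.apply_eq_smul]

theorem IsDiagonalizable.right_of_kroneckerSum (h : IsDiagonalizable (kroneckerSum A B)) {a : K}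
    (ha : A.HasEigenvalue a) : IsDiagonalizable B := by
  obtain ⟨x, hx⟩ := ha.exists_hasEigenvector
  have h_inj : Function.Injective (TensorProduct.mk K V₁ V₂ x) :=
    (injective_iff_map_eq_zero _).mpr fun y hy => (tmul_eq_zero_iff.mp hy).resolve_left hx.2
  refine (isDiagonalizable_add_algebraMap_iff (a := a)).mp (h.of_injective h_inj fun y => ?_)
  simp [kroneckerSum, hx.apply_eq_smul, TensorProduct.smul_tmul', TensorProduct.tmul_add, add_comm]

theorem stmt13_general [IsAlgClosed K] [Nontrivial V₁] [Nontrivial V₂]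
    (h : IsDiagonalizable (kroneckerSum A B)) : IsDiagonalizable A ∧ IsDiagonalizable B := by
  obtain ⟨μ, hμ⟩ := h.exists_hasEigenvalue
  obtain ⟨a, ha⟩ := exists_hasEigenvalue_left_of_kroneckerSum hμ
  have hB : IsDiagonalizable B := h.right_of_kroneckerSum ha
  obtain ⟨b, hb⟩ := hB.exists_hasEigenvalue
  exact ⟨h.left_of_kroneckerSum hb, hB⟩

end KroneckerSum

/-- If the Kronecker sum `A ⊗ id + id ⊗ B` of endomorphisms of nonzero finite-dimensional
vector spaces over an algebraically closed field is diagonalizable (the sum of its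
eigenspaces is everything), then `A` and `B` are each diagonalizable. -/
theorem stmt13 (K V₁ V₂ : Type*) [Field K] [IsAlgClosed K]
    [AddCommGroup V₁] [Module K V₁] [AddCommGroup V₂] [Module K V₂]
    [FiniteDimensional K V₁] [FiniteDimensional K V₂]
    [Nontrivial V₁] [Nontrivial V₂]
    (A : Module.End K V₁) (B : Module.End K V₂)
    (h : (⨆ μ : K, Module.End.eigenspace
        (TensorProduct.map (A : V₁ →ₗ[K] V₁) (LinearMap.id : V₂ →ₗ[K] V₂)
          + TensorProduct.map (LinearMap.id : V₁ →ₗ[K] V₁) (B : V₂ →ₗ[K] V₂)) μ) = ⊤) :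
    (⨆ μ : K, Module.End.eigenspace A μ) = ⊤ ∧
    (⨆ μ : K, Module.End.eigenspace B μ) = ⊤ :=
  stmt13_general h
end
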